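/- arXiv:2105.12986 — 4 statements merged into one kernel-verified Lean document; each statement's English description precedes it below -/
import Mathlib

section
/- Let M and M' be maximal coherent sets of gambles on Ω and let 𝒫x be a partition of Ω. Then ε_x(M) = ε_x(M') if and only if ε_x(M) ⊆ M' (that is, M' ∈ At(ε_x(M)); in particular two maximal sets containing a common local atom ε_x(M'') have the same extraction under ε_x). -/
open Set

universe u

/-- The set of gambles on `Ω`: bounded real-valued functions. -/
def Gmb (Ω : Type u) : Set (Ω → ℝ) := {f | ∃ B : ℝ, ∀ ω, |f ω| ≤ B}

/-- `L⁺(Ω)`: non-negative, non-vanishing gambles. -/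
def GmbPos (Ω : Type u) : Set (Ω → ℝ) :=
  {f | f ∈ Gmb Ω ∧ (∀ ω, 0 ≤ f ω) ∧ f ≠ 0}

/-- Coherent set of gambles. -/
def Coherent {Ω : Type u} (D : Set (Ω → ℝ)) : Prop :=
  D ⊆ Gmb Ω ∧ GmbPos Ω ⊆ D ∧ (0 : Ω → ℝ) ∉ D ∧
    (∀ f ∈ D, ∀ g ∈ D, f + g ∈ D) ∧
    (∀ f ∈ D, ∀ c : ℝ, 0 < c → c • f ∈ D)

/-- Maximal coherent set of gambles: no coherent set properly contains it. -/
def MaxCoh {Ω : Type u} (M : Set (Ω → ℝ)) : Prop :=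
  Coherent M ∧ ∀ D : Set (Ω → ℝ), Coherent D → M ⊆ D → D = M

/-- Membership in `Φ(Ω)`: coherent sets together with `L(Ω)`. -/
def PhiMem {Ω : Type u} (D : Set (Ω → ℝ)) : Prop :=
  Coherent D ∨ D = Gmb Ω

/-- The closure operator `C` on sets of gambles. -/
def Cl {Ω : Type u} (A : Set (Ω → ℝ)) : Set (Ω → ℝ) :=
  ⋂₀ {D | PhiMem D ∧ A ⊆ D}

/-- Order on partitions (as equivalence relations): `ple x y` iff `𝒫x ≤ 𝒫y`,
i.e. `y` refines `x`. -/
def ple {Ω : Type u} (x y : Setoid Ω) : Prop := ∀ a b : Ω, y.r a b → x.r a b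

/-- Join of two partitions: the relation is the conjunction. -/
def pjoin {Ω : Type u} (x y : Setoid Ω) : Setoid Ω :=
  ⟨fun a b => x.r a b ∧ y.r a b,
    ⟨fun a => ⟨x.iseqv.refl a, y.iseqv.refl a⟩,
     fun h => ⟨x.iseqv.symm h.1, y.iseqv.symm h.2⟩,
     fun h h' => ⟨x.iseqv.trans h.1 h'.1, y.iseqv.trans h.2 h'.2⟩⟩⟩

/-- Conditional independence of partitions: blocks are equivalence classes,
`B1 ∩ B ≠ ∅` and `B2 ∩ B ≠ ∅` imply `B1 ∩ B2 ∩ B ≠ ∅`. -/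
def CondIndep {Ω : Type u} (p1 p2 p : Setoid Ω) : Prop :=
  ∀ a b c : Ω, (∃ u, p1.r a u ∧ p.r c u) → (∃ v, p2.r b v ∧ p.r c v) →
    ∃ w, p1.r a w ∧ p2.r b w ∧ p.r c w

/-- Saturation operator of a partition. -/
def sat {Ω : Type u} (x : Setoid Ω) (S : Set Ω) : Set Ω :=
  {ω | ∃ ω' ∈ S, x.r ω ω'}

/-- `L_x`: the `x`-measurable gambles. -/
def Meas {Ω : Type u} (x : Setoid Ω) : Set (Ω → ℝ) :=
  {f | f ∈ Gmb Ω ∧ ∀ a b : Ω, x.r a b → f a = f b}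

/-- Extraction operator `ε_x`. -/
def eps {Ω : Type u} (x : Setoid Ω) (D : Set (Ω → ℝ)) : Set (Ω → ℝ) :=
  Cl (D ∩ Meas x)

/-- `At(D)`: maximal coherent sets dominating `D`. -/
def Atoms {Ω : Type u} (D : Set (Ω → ℝ)) : Set (Set (Ω → ℝ)) :=
  {M | MaxCoh M ∧ D ⊆ M}

/-- `D_S`: the coherent set of gambles associated to a set `S ⊆ Ω`. -/
def DS {Ω : Type u} (S : Set Ω) : Set (Ω → ℝ) :=
  {f | f ∈ Gmb Ω ∧ 0 < sInf (f '' S)} ∪ GmbPos Ω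

/-- `posi(K)`: positive linear hull. -/
def posi {Ω : Type u} (K : Set (Ω → ℝ)) : Set (Ω → ℝ) :=
  {g | ∃ r : ℕ, 1 ≤ r ∧ ∃ (lam : Fin r → ℝ) (f : Fin r → (Ω → ℝ)),
    (∀ j, 0 < lam j) ∧ (∀ j, f j ∈ K) ∧ g = ∑ j, lam j • f j}

/-!
A maximal coherent set `M` is total: it contains `f` or `-f` for every nonzero gamble `f`, because
if `-f ∉ M` then the convex cone generated by `M` and `f` is again coherent. Consequently, if every
`x`-measurable gamble in `M` belongs to a coherent set `D`, then `M` and `D` have the same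
`x`-measurable gambles: for such a gamble `f` in `D` but not in `M` one would have
`-f ∈ M ∩ L_x ⊆ D`, so that `0 = f + -f ∈ D`.
-/

section AdjoinRay

variable {𝕜 E : Type*} [Field 𝕜] [LinearOrder 𝕜] [IsStrictOrderedRing 𝕜] [AddCommGroup E]
  [Module 𝕜 E] {K L : ConvexCone 𝕜 E} {f : E}

/-- The convex cone generated by `K` and `f`, used to extend a coherent set by one gamble. The pure
multiples of `f` form a case of their own because `K` need not contain `0`. -/
def adjoinRay (K : ConvexCone 𝕜 E) (f : E) : ConvexCone 𝕜 E where
  carrier := {g | (∃ c : 𝕜, 0 ≤ c ∧ ∃ m ∈ K, m + c • f = g) ∨ ∃ c : 𝕜, 0 < c ∧ c • f = g}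
  smul_mem' := by
    rintro d hd _ (⟨c, hc, m, hm, rfl⟩ | ⟨c, hc, rfl⟩)
    · exact Or.inl ⟨d * c, by positivity, d • m, K.smul_mem hd hm, by module⟩
    · exact Or.inr ⟨d * c, by positivity, by module⟩
  add_mem' := by
    rintro _ (⟨c, hc, m, hm, rfl⟩ | ⟨c, hc, rfl⟩) _ (⟨d, hd, n, hn, rfl⟩ | ⟨d, hd, rfl⟩)
    · exact Or.inl ⟨c + d, by positivity, m + n, K.add_mem hm hn, by module⟩
    · exact Or.inl ⟨c + d, by positivity, m, hm, by module⟩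
    · exact Or.inl ⟨c + d, by positivity, n, hn, by module⟩
    · exact Or.inr ⟨c + d, by positivity, by module⟩

theorem le_adjoinRay : K ≤ adjoinRay K f :=
  fun m hm => Or.inl ⟨0, le_rfl, m, hm, by simp⟩

theorem self_mem_adjoinRay : f ∈ adjoinRay K f :=
  Or.inr ⟨1, one_pos, one_smul 𝕜 f⟩

theorem adjoinRay_le (hK : K ≤ L) (hf : f ∈ L) : adjoinRay K f ≤ L := by
  rintro _ (⟨c, hc, m, hm, rfl⟩ | ⟨c, hc, rfl⟩)
  · rcases hc.eq_or_lt with rfl | hc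
    · simpa using hK hm
    · exact L.add_mem (hK hm) (L.smul_mem hc hf)
  · exact L.smul_mem hc hf

theorem blunt_adjoinRay (hK : K.Blunt) (hf : f ≠ 0) (hneg : -f ∉ K) : (adjoinRay K f).Blunt := by
  rintro (⟨c, hc, m, hm, h⟩ | ⟨c, hc, h⟩)
  · rcases hc.eq_or_lt with rfl | hc
    · obtain rfl : m = 0 := by simpa using h
      exact hK hm
    · have hcf : c • -f ∈ K := by
        rwa [smul_neg, ← eq_neg_of_add_eq_zero_left h]
      exact hneg ((K.smul_mem_iff hc).1 hcf)
  · exact (smul_ne_zero hc.ne' hf) h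

end AdjoinRay

section Gambles

variable {Ω : Type u} {f : Ω → ℝ} {x : Setoid Ω}

theorem mem_Gmb_iff_memℓp : f ∈ Gmb Ω ↔ Memℓp f ⊤ := by
  simp only [memℓp_infty_iff, bddAbove_def, forall_mem_range, Real.norm_eq_abs, Gmb, mem_ofPred_eq]

variable (Ω) in
/-- The gambles `L(Ω)` as a convex cone, the ambient cone of all coherent sets. -/
def gambleCone : ConvexCone ℝ (Ω → ℝ) where
  carrier := Gmb Ω
  smul_mem' c _ _ hf := mem_Gmb_iff_memℓp.2 ((mem_Gmb_iff_memℓp.1 hf).const_smul c)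
  add_mem' _ hf _ hg := mem_Gmb_iff_memℓp.2 ((mem_Gmb_iff_memℓp.1 hf).add (mem_Gmb_iff_memℓp.1 hg))

theorem neg_mem_Meas (hf : f ∈ Meas x) : -f ∈ Meas x :=
  ⟨mem_Gmb_iff_memℓp.2 (mem_Gmb_iff_memℓp.1 hf.1).neg,
    fun a b hab => congrArg Neg.neg (hf.2 a b hab)⟩

end Gambles

section Coherent

variable {Ω : Type u} {A D M V : Set (Ω → ℝ)} {f : Ω → ℝ}

namespace Coherent

/-- A coherent set as a convex cone. -/
def cone (hD : Coherent D) : ConvexCone ℝ (Ω → ℝ) where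
  carrier := D
  smul_mem' c hc f hf := hD.2.2.2.2 f hf c hc
  add_mem' f hf g hg := hD.2.2.2.1 f hf g hg

theorem neg_notMem (hD : Coherent D) (hf : f ∈ D) : -f ∉ D := by
  intro hneg
  apply hD.2.2.1
  simpa only [add_neg_cancel] using hD.2.2.2.1 f hf (-f) hneg

theorem coherent_adjoinRay (hD : Coherent D) (hf : f ∈ Gmb Ω) (hf0 : f ≠ 0) (hneg : -f ∉ D) :
    Coherent (adjoinRay hD.cone f : Set (Ω → ℝ)) := by
  have hsub : adjoinRay hD.cone f ≤ gambleCone Ω := adjoinRay_le hD.1 hf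
  have hpos : GmbPos Ω ⊆ adjoinRay hD.cone f := hD.2.1.trans (le_adjoinRay (K := hD.cone))
  have hzero : (adjoinRay hD.cone f).Blunt := blunt_adjoinRay hD.2.2.1 hf0 hneg
  exact ⟨hsub, hpos, hzero, fun _ hg _ hh => ConvexCone.add_mem _ hg hh,
    fun _ hg _ hc => ConvexCone.smul_mem _ hc hg⟩

theorem Cl_subset_iff (hD : Coherent D) : Cl A ⊆ D ↔ A ⊆ D :=
  ⟨(subset_sInter fun _ hB => hB.2).trans, fun h => sInter_subset_of_mem ⟨Or.inl hD, h⟩⟩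

end Coherent

namespace MaxCoh

theorem mem_or_neg_mem (hM : MaxCoh M) (hf : f ∈ Gmb Ω) (hf0 : f ≠ 0) : f ∈ M ∨ -f ∈ M := by
  refine or_iff_not_imp_right.2 fun hneg => ?_
  have hext : (adjoinRay hM.1.cone f : Set (Ω → ℝ)) = M :=
    hM.2 _ (hM.1.coherent_adjoinRay hf hf0 hneg) (le_adjoinRay (K := hM.1.cone))
  exact hext.subset self_mem_adjoinRay

theorem inter_eq_inter_of_inter_subset (hM : MaxCoh M) (hD : Coherent D)
    (hV : ∀ f ∈ V, -f ∈ V) (h : M ∩ V ⊆ D) : M ∩ V = D ∩ V := by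
  refine (subset_inter h inter_subset_right).antisymm fun f ⟨hfD, hfV⟩ => ⟨?_, hfV⟩
  have hf0 : f ≠ 0 := ne_of_mem_of_not_mem hfD hD.2.2.1
  refine (hM.mem_or_neg_mem (hD.1 hfD) hf0).resolve_right fun hneg => ?_
  exact hD.neg_notMem hfD (h ⟨hneg, hV f hfV⟩)

end MaxCoh

end Coherent

theorem stmt3_general {Ω : Type u} (x : Setoid Ω) {M D : Set (Ω → ℝ)} (hM : MaxCoh M)
    (hD : Coherent D) : eps x M = eps x D ↔ eps x M ⊆ D := by
  constructor
  · intro h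
    exact h.trans_subset (hD.Cl_subset_iff.2 inter_subset_left)
  · intro h
    have hsub : M ∩ Meas x ⊆ D := hD.Cl_subset_iff.1 h
    exact congrArg Cl (hM.inter_eq_inter_of_inter_subset hD (fun _ => neg_mem_Meas) hsub)

theorem stmt3 {Ω : Type u} [Nonempty Ω] (x : Setoid Ω) (M M' : Set (Ω → ℝ))
    (hM : MaxCoh M) (hM' : MaxCoh M') :
    eps x M = eps x M' ↔ eps x M ⊆ M' :=
  stmt3_general x hM hM'.1
end

section
/- Let 𝒫x and 𝒫y be partitions of Ω. Then 𝒫x ≤ 𝒫y (every block of 𝒫y is contained in a block of 𝒫x) if and only if for all maximal coherent sets of gambles M, M' on Ω, ε_y(M) = ε_y(M') implies ε_x(M) = ε_x(M'). In other words, the map 𝒫x ↦ At_x from partitions of Ω to the induced partitions of the set of maximal coherent sets is an order isomorphism onto its image. -/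
open Set

universe u

/-!
On a coherent set `D` the extraction `ε_x(D)` carries the same information as the trace `D ∩ L_x`.
If `y` refines `x`, then `L_x ⊆ L_y`, so the trace on `L_y` determines the trace on `L_x`.
Conversely, let `a` and `b` share a block of `y` but not of `x`. Extend `D_{a}` to a maximal set `M`
and let `M'` be its image under the transposition of `a` and `b`. Every `y`-measurable gamble is
invariant under this transposition, so `ε_y(M) = ε_y(M')`. But `M'` contains `D_{b}`, so an
`x`-measurable gamble that is positive at `a` and negative at `b` lies in `M` and not in `M'`.
-/

section Gambles

variable {Ω Ω' : Type*} {f g : Ω → ℝ}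

theorem add_mem_Gmb (hf : f ∈ Gmb Ω) (hg : g ∈ Gmb Ω) : f + g ∈ Gmb Ω := by
  obtain ⟨B, hB⟩ := hf
  obtain ⟨C, hC⟩ := hg
  exact ⟨B + C, fun ω => (abs_add_le _ _).trans (add_le_add (hB ω) (hC ω))⟩

theorem smul_mem_Gmb (c : ℝ) (hf : f ∈ Gmb Ω) : c • f ∈ Gmb Ω := by
  obtain ⟨B, hB⟩ := hf
  refine ⟨|c| * B, fun ω => ?_⟩
  rw [Pi.smul_apply, smul_eq_mul, abs_mul]
  exact mul_le_mul_of_nonneg_left (hB ω) (abs_nonneg c)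

theorem neg_mem_Gmb (hf : f ∈ Gmb Ω) : -f ∈ Gmb Ω := by
  simpa only [neg_one_smul] using smul_mem_Gmb (-1) hf

theorem bddBelow_image_of_mem_Gmb (hf : f ∈ Gmb Ω) (S : Set Ω) : BddBelow (f '' S) := by
  obtain ⟨B, hB⟩ := hf
  exact ⟨-B, forall_mem_image.2 fun ω _ => neg_le_of_abs_le (hB ω)⟩

theorem comp_mem_Gmb_iff {e : Ω → Ω'} (he : Function.Surjective e) {f : Ω' → ℝ} :
    f ∘ e ∈ Gmb Ω ↔ f ∈ Gmb Ω' :=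
  exists_congr fun B => (he.forall (p := fun ω => |f ω| ≤ B)).symm

theorem add_mem_GmbPos (hf : f ∈ GmbPos Ω) (hg : g ∈ GmbPos Ω) : f + g ∈ GmbPos Ω := by
  obtain ⟨hfB, hf_nonneg, hf_ne⟩ := hf
  obtain ⟨hgB, hg_nonneg, -⟩ := hg
  exact ⟨add_mem_Gmb hfB hgB, fun ω => add_nonneg (hf_nonneg ω) (hg_nonneg ω),
    fun h => hf_ne ((add_eq_zero_iff_of_nonneg hf_nonneg hg_nonneg).1 h).1⟩

theorem smul_mem_GmbPos {c : ℝ} (hc : 0 < c) (hf : f ∈ GmbPos Ω) : c • f ∈ GmbPos Ω :=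
  ⟨smul_mem_Gmb c hf.1, fun ω => mul_nonneg hc.le (hf.2.1 ω), smul_ne_zero hc.ne' hf.2.2⟩

theorem comp_mem_GmbPos_iff {e : Ω → Ω'} (he : Function.Surjective e) {f : Ω' → ℝ} :
    f ∘ e ∈ GmbPos Ω ↔ f ∈ GmbPos Ω' :=
  and_congr (comp_mem_Gmb_iff he)
    (and_congr (he.forall (p := fun ω => 0 ≤ f ω)).symm (he.injective_comp_right.ne_iff' rfl))

end Gambles

section Measurable

variable {Ω : Type*} {x y : Setoid Ω} {a b : Ω} {f : Ω → ℝ}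

theorem Meas_subset_Meas (h : ple x y) : Meas x ⊆ Meas y :=
  fun _ hf => ⟨hf.1, fun a b hab => hf.2 a b (h a b hab)⟩

theorem exists_mem_Meas_pos_neg (hab : ¬ x.r a b) : ∃ f ∈ Meas x, 0 < f a ∧ f b < 0 := by
  classical
  refine ⟨fun ω => if x.r a ω then 1 else -1, ⟨⟨1, fun ω => ?_⟩, fun u v huv => ?_⟩, ?_, ?_⟩
  · beta_reduce
    split_ifs <;> simp
  · have h_block : x.r a u ↔ x.r a v :=
      ⟨fun h => x.iseqv.trans h huv, fun h => x.iseqv.trans h (x.iseqv.symm huv)⟩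
    simp only [h_block]
  · simp
  · simp [hab]

theorem comp_eq_of_mem_Meas {e : Ω → Ω} (he : ∀ ω, x.r (e ω) ω) (hf : f ∈ Meas x) :
    f ∘ e = f :=
  funext fun ω => hf.2 _ _ (he ω)

theorem rel_swap_apply [DecidableEq Ω] (hab : x.r a b) (ω : Ω) : x.r (Equiv.swap a b ω) ω := by
  rw [Equiv.swap_apply_def]
  split_ifs with ha hb
  · exact ha ▸ x.iseqv.symm hab
  · exact hb ▸ hab
  · exact x.iseqv.refl ω

end Measurable

section Coherence

variable {Ω : Type*} {D : Set (Ω → ℝ)} {f g : Ω → ℝ}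

theorem Coherent.subset_Gmb (hD : Coherent D) : D ⊆ Gmb Ω := hD.1

theorem Coherent.GmbPos_subset (hD : Coherent D) : GmbPos Ω ⊆ D := hD.2.1

theorem Coherent.zero_notMem (hD : Coherent D) : (0 : Ω → ℝ) ∉ D := hD.2.2.1

theorem Coherent.add_mem (hD : Coherent D) (hf : f ∈ D) (hg : g ∈ D) : f + g ∈ D :=
  hD.2.2.2.1 f hf g hg

theorem Coherent.smul_mem (hD : Coherent D) {c : ℝ} (hc : 0 < c) (hf : f ∈ D) : c • f ∈ D :=
  hD.2.2.2.2 f hf c hc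

theorem Coherent.neg_notMem_s5 (hD : Coherent D) (hf : f ∈ D) : -f ∉ D := fun hneg =>
  hD.zero_notMem (add_neg_cancel f ▸ hD.add_mem hf hneg)

theorem coherent_sUnion {c : Set (Set (Ω → ℝ))} (hc : ∀ D ∈ c, Coherent D)
    (hdir : DirectedOn (· ⊆ ·) c) (hne : c.Nonempty) : Coherent (⋃₀ c) := by
  obtain ⟨D₀, hD₀⟩ := hne
  refine ⟨sUnion_subset fun D hD => (hc D hD).subset_Gmb,
    (hc D₀ hD₀).GmbPos_subset.trans (subset_sUnion_of_mem hD₀), ?_, ?_, ?_⟩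
  · rintro ⟨D, hD, h0⟩
    exact (hc D hD).zero_notMem h0
  · rintro f ⟨D, hD, hf⟩ g ⟨D', hD', hg⟩
    obtain ⟨E, hE, hDE, hD'E⟩ := hdir D hD D' hD'
    exact ⟨E, hE, (hc E hE).add_mem (hDE hf) (hD'E hg)⟩
  · rintro f ⟨D, hD, hf⟩ k hk
    exact ⟨D, hD, (hc D hD).smul_mem hk hf⟩

theorem Coherent.exists_maxCoh_superset (hD : Coherent D) : ∃ M, D ⊆ M ∧ MaxCoh M := by
  obtain ⟨M, hDM, hM⟩ := zorn_subset_nonempty {E : Set (Ω → ℝ) | Coherent E}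
    (fun c hc hchain hne => ⟨⋃₀ c, coherent_sUnion (fun _ hE => hc hE) hchain.directedOn hne,
      fun _ => subset_sUnion_of_mem⟩) D hD
  exact ⟨M, hDM, hM.prop, fun E hE hME => (hM.eq_of_subset hE hME).symm⟩

end Coherence

section DS

variable {Ω : Type*} {S : Set Ω} {f : Ω → ℝ}

theorem sInf_image_pos_iff (hS : S.Nonempty) (hf : f ∈ Gmb Ω) :
    0 < sInf (f '' S) ↔ ∃ δ > 0, ∀ ω ∈ S, δ ≤ f ω :=
  ⟨fun h => ⟨_, h, fun _ hω => csInf_le (bddBelow_image_of_mem_Gmb hf S) (mem_image_of_mem f hω)⟩,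
    fun ⟨_, hδ, h⟩ => hδ.trans_le (le_csInf (hS.image f) (forall_mem_image.2 h))⟩

theorem mem_DS_iff (hS : S.Nonempty) :
    f ∈ DS S ↔ (f ∈ Gmb Ω ∧ ∃ δ > 0, ∀ ω ∈ S, δ ≤ f ω) ∨ f ∈ GmbPos Ω :=
  or_congr_left (and_congr_right fun hf => sInf_image_pos_iff hS hf)

theorem mem_DS_singleton {a : Ω} (hf : f ∈ Gmb Ω) (ha : 0 < f a) : f ∈ DS {a} :=
  Or.inl ⟨hf, by rwa [image_singleton, csInf_singleton]⟩

theorem coherent_DS (hS : S.Nonempty) : Coherent (DS S) := by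
  refine ⟨union_subset (fun _ h => h.1) (fun _ h => h.1), subset_union_right, ?_, ?_, ?_⟩
  · rw [mem_DS_iff hS]
    rintro (⟨-, δ, hδ, h⟩ | h)
    · obtain ⟨ω, hω⟩ := hS
      exact hδ.not_ge (h ω hω)
    · exact h.2.2 rfl
  · intro f hf g hg
    rw [mem_DS_iff hS] at *
    rcases hf with ⟨hfB, δ, hδ, hf⟩ | hf <;> rcases hg with ⟨hgB, η, hη, hg⟩ | hg
    · exact Or.inl ⟨add_mem_Gmb hfB hgB, δ + η, add_pos hδ hη,
        fun ω hω => add_le_add (hf ω hω) (hg ω hω)⟩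
    · exact Or.inl ⟨add_mem_Gmb hfB hg.1, δ, hδ,
        fun ω hω => le_add_of_le_of_nonneg (hf ω hω) (hg.2.1 ω)⟩
    · exact Or.inl ⟨add_mem_Gmb hf.1 hgB, η, hη,
        fun ω hω => le_add_of_nonneg_of_le (hf.2.1 ω) (hg ω hω)⟩
    · exact Or.inr (add_mem_GmbPos hf hg)
  · intro f hf c hc
    rw [mem_DS_iff hS] at *
    rcases hf with ⟨hfB, δ, hδ, hf⟩ | hf
    · exact Or.inl ⟨smul_mem_Gmb c hfB, c * δ, mul_pos hc hδ,
        fun ω hω => mul_le_mul_of_nonneg_left (hf ω hω) hc.le⟩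
    · exact Or.inr (smul_mem_GmbPos hc hf)

end DS

section Pushforward

variable {Ω Ω' : Type*} {D : Set (Ω → ℝ)}

/-- The pushforward of a set of gambles along a map `e` of possibility spaces: a gamble on the
target is accepted when its pullback along `e` is. Along a permutation it relabels outcomes. -/
def pushforward (e : Ω → Ω') (D : Set (Ω → ℝ)) : Set (Ω' → ℝ) := {f | f ∘ e ∈ D}

theorem pushforward_mono (e : Ω → Ω') : Monotone (pushforward e) :=
  fun _ _ h _ hf => h hf

theorem pushforward_symm_pushforward (e : Ω ≃ Ω') (D : Set (Ω → ℝ)) :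
    pushforward e.symm (pushforward e D) = D := by
  simp [pushforward, Function.comp_assoc]

theorem pushforward_DS {e : Ω → Ω'} (he : Function.Surjective e) (S : Set Ω) :
    pushforward e (DS S) = DS (e '' S) := by
  ext f
  refine or_congr (and_congr (comp_mem_Gmb_iff he) ?_) (comp_mem_GmbPos_iff he)
  rw [image_comp]

theorem Coherent.pushforward {e : Ω → Ω'} (he : Function.Surjective e) (hD : Coherent D) :
    Coherent (pushforward e D) :=
  ⟨fun _ hf => (comp_mem_Gmb_iff he).1 (hD.subset_Gmb hf),
    fun _ hf => hD.GmbPos_subset ((comp_mem_GmbPos_iff he).2 hf), hD.zero_notMem,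
    fun _ hf _ hg => hD.add_mem hf hg, fun _ hf _ hc => hD.smul_mem hc hf⟩

theorem MaxCoh.pushforward (e : Ω ≃ Ω') {M : Set (Ω → ℝ)} (hM : MaxCoh M) :
    MaxCoh (pushforward e M) := by
  refine ⟨hM.1.pushforward e.surjective, fun D hD hMD => ?_⟩
  have hM_sub : M ⊆ _root_.pushforward e.symm D :=
    (pushforward_symm_pushforward e M).ge.trans (pushforward_mono e.symm hMD)
  rw [← hM.2 _ (hD.pushforward e.symm.surjective) hM_sub]
  exact (pushforward_symm_pushforward e.symm D).symm

end Pushforward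

section Extraction

variable {Ω : Type*} {x y : Setoid Ω} {D D' : Set (Ω → ℝ)} {a b : Ω}

theorem Coherent.eps_inter_Meas (hD : Coherent D) : eps x D ∩ Meas x = D ∩ Meas x :=
  Subset.antisymm
    (fun _ hf => ⟨hf.1 D ⟨Or.inl hD, inter_subset_left⟩, hf.2⟩)
    (fun _ hf => ⟨fun _ hE => hE.2 hf, hf.2⟩)

theorem eps_eq_eps_iff (hD : Coherent D) (hD' : Coherent D') :
    eps x D = eps x D' ↔ D ∩ Meas x = D' ∩ Meas x :=
  ⟨fun h => by rw [← hD.eps_inter_Meas, h, hD'.eps_inter_Meas], congrArg Cl⟩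

theorem eps_eq_eps_of_ple (hxy : ple x y) (hD : Coherent D) (hD' : Coherent D')
    (h : eps y D = eps y D') : eps x D = eps x D' := by
  rw [eps_eq_eps_iff hD hD'] at h ⊢
  rw [← inter_eq_right.2 (Meas_subset_Meas hxy), ← inter_assoc, ← inter_assoc, h]

theorem eps_pushforward {e : Ω → Ω} (he : ∀ ω, x.r (e ω) ω) (D : Set (Ω → ℝ)) :
    eps x (pushforward e D) = eps x D := by
  refine congrArg Cl (Set.ext fun f => and_congr_left fun hf => ?_)
  rw [pushforward, mem_ofPred_eq, comp_eq_of_mem_Meas he hf]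

theorem eps_ne_eps_of_DS_subset (hab : ¬ x.r a b) (hD : Coherent D) (hD' : Coherent D')
    (haD : DS {a} ⊆ D) (hbD' : DS {b} ⊆ D') : eps x D ≠ eps x D' := by
  intro h
  obtain ⟨f, hf, hfa, hfb⟩ := exists_mem_Meas_pos_neg hab
  have hfD : f ∈ D := haD (mem_DS_singleton hf.1 hfa)
  have hfD' : f ∈ D' := (((eps_eq_eps_iff hD hD').1 h).le ⟨hfD, hf⟩).1
  exact hD'.neg_notMem_s5 hfD' (hbD' (mem_DS_singleton (neg_mem_Gmb hf.1) (neg_pos.2 hfb)))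

theorem exists_maxCoh_eps_eq_and_ne (hy : y.r a b) (hx : ¬ x.r a b) :
    ∃ M M' : Set (Ω → ℝ), MaxCoh M ∧ MaxCoh M' ∧ eps y M = eps y M' ∧ eps x M ≠ eps x M' := by
  classical
  obtain ⟨M, haM, hM⟩ := (coherent_DS (singleton_nonempty a)).exists_maxCoh_superset
  have hM' : MaxCoh (pushforward (Equiv.swap a b) M) := hM.pushforward _
  have hbM' : DS {b} ⊆ pushforward (Equiv.swap a b) M := by
    have h := pushforward_DS (Equiv.swap a b).surjective {a}
    rw [image_singleton, Equiv.swap_apply_left] at h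
    exact h.ge.trans (pushforward_mono _ haM)
  exact ⟨M, _, hM, hM', (eps_pushforward (rel_swap_apply hy) M).symm,
    eps_ne_eps_of_DS_subset hx hM.1 hM'.1 haM hbM'⟩

end Extraction

theorem stmt5 {Ω : Type u} [Nonempty Ω] (x y : Setoid Ω) :
    ple x y ↔
      ∀ M M' : Set (Ω → ℝ), MaxCoh M → MaxCoh M' →
        eps y M = eps y M' → eps x M = eps x M' := by
  refine ⟨fun hxy M M' hM hM' => eps_eq_eps_of_ple hxy hM.1 hM'.1, fun h a b hy => ?_⟩
  by_contra hx
  obtain ⟨M, M', hM, hM', heq, hne⟩ := exists_maxCoh_eps_eq_and_ne hy hx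
  exact hne (h M M' hM hM' heq)
end

section
/- Let 𝒫x, 𝒫y, 𝒫z be partitions of Ω such that (𝒫x ∨ 𝒫z) ⊥ (𝒫y ∨ 𝒫z) | 𝒫z. Then for every subset S ⊆ Ω: σ_{y∨z}(σ_x(S)) = σ_{y∨z}(σ_z(σ_x(S))). -/
open Set

universe u

/-!
Let `T` be saturated for `p₁`, and suppose `ω ≡_{p₂} v` and `v ≡_p t` with `t ∈ T`. The `p`-block of
`t` meets both the `p₁`-block of `t` and the `p₂`-block of `ω`, so by conditional independence these
two blocks share a point `w`. Then `ω ≡_{p₂} w ≡_{p₁} t`: the step through `p` is traded for a step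
through `p₁`, which does not leave `T`.
-/

section Saturation

variable {Ω : Type u}

lemma subset_sat (x : Setoid Ω) (S : Set Ω) : S ⊆ sat x S :=
  fun ω hω => ⟨ω, hω, x.refl ω⟩

lemma sat_mono (x : Setoid Ω) {S T : Set Ω} (hST : S ⊆ T) : sat x S ⊆ sat x T :=
  fun _ ⟨s, hs, hωs⟩ => ⟨s, hST hs, hωs⟩

lemma sat_sat_of_ple {x y : Setoid Ω} (hxy : ple x y) (S : Set Ω) :
    sat y (sat x S) = sat x S := by
  refine Subset.antisymm ?_ (subset_sat y _)
  rintro ω ⟨ω', ⟨s, hs, hω's⟩, hωω'⟩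
  exact ⟨s, hs, x.trans (hxy ω ω' hωω') hω's⟩

lemma ple_pjoin_left (x y : Setoid Ω) : ple x (pjoin x y) :=
  fun _ _ => And.left

end Saturation

section CondIndep

variable {Ω : Type u} {p₁ p₂ p : Setoid Ω}

lemma CondIndep.sat_sat_subset (h : CondIndep p₁ p₂ p) (T : Set Ω) :
    sat p₂ (sat p T) ⊆ sat p₂ (sat p₁ T) := by
  rintro ω ⟨v, ⟨t, ht, hvt⟩, hωv⟩
  obtain ⟨w, htw, hωw, -⟩ := h t ω t ⟨t, p₁.refl t, p.refl t⟩ ⟨v, hωv, p.symm hvt⟩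
  exact ⟨w, ⟨t, ht, p₁.symm htw⟩, hωw⟩

theorem stmt11_general (h : CondIndep p₁ p₂ p) {x : Setoid Ω} (hx : ple x p₁) (S : Set Ω) :
    sat p₂ (sat x S) = sat p₂ (sat p (sat x S)) := by
  refine Subset.antisymm (sat_mono p₂ (subset_sat p _)) ?_
  calc sat p₂ (sat p (sat x S))
      ⊆ sat p₂ (sat p₁ (sat x S)) := h.sat_sat_subset _
    _ = sat p₂ (sat x S) := by rw [sat_sat_of_ple hx]

end CondIndep

theorem stmt11 {Ω : Type u} [Nonempty Ω] (x y z : Setoid Ω)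
    (h : CondIndep (pjoin x z) (pjoin y z) z) (S : Set Ω) :
    sat (pjoin y z) (sat x S) = sat (pjoin y z) (sat z (sat x S)) :=
  stmt11_general h (ple_pjoin_left x z) S
end

section
/- The family of coherent sets of gambles on Ω is atomic and atomistic: for every coherent set of gambles D there exists a maximal coherent set M with D ⊆ M (so At(D) ≠ ∅), and D equals the intersection of all maximal coherent sets containing it, D = ⋂ At(D). -/
open Set

universe u

/-!
A coherent set is exactly a blunt convex cone of gambles containing `L⁺(Ω)`, and `L⁺(Ω)` is
inherited by larger cones, so the theorem is about blunt cones inside a vector space `W`. Blunt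
cones are closed under unions of chains, so Zorn's lemma puts each of them inside a maximal one.
If `f ∈ W` is nonzero and outside a blunt cone `K`, then `K` together with the ray through `-f`
still generates a blunt cone; a maximal blunt cone above it contains `-f`, hence not `f`.
-/

open scoped Pointwise

section SupremaOfCones

variable {R E : Type*} [Semiring R] [PartialOrder R] [AddCommMonoid E]

theorem convexCone_coe_sup [DistribSMul R E] (K L : ConvexCone R E) :
    (↑(K ⊔ L) : Set E) = (K : Set E) ∪ L ∪ (K + L) := by
  let U : ConvexCone R E :=
    { carrier := (K : Set E) ∪ L ∪ (K + L)
      smul_mem' := by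
        rintro c hc x ((hx | hx) | ⟨y, hy, z, hz, rfl⟩)
        · exact .inl (.inl (K.smul_mem hc hx))
        · exact .inl (.inr (L.smul_mem hc hx))
        · exact .inr ⟨c • y, K.smul_mem hc hy, c • z, L.smul_mem hc hz, (smul_add c y z).symm⟩
      add_mem' := by
        rintro x ((hx | hx) | ⟨x₁, hx₁, x₂, hx₂, rfl⟩) y ((hy | hy) | ⟨y₁, hy₁, y₂, hy₂, rfl⟩)
        · exact .inl (.inl (K.add_mem hx hy))
        · exact .inr ⟨x, hx, y, hy, rfl⟩
        · exact .inr ⟨x + y₁, K.add_mem hx hy₁, y₂, hy₂, add_assoc x y₁ y₂⟩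
        · exact .inr ⟨y, hy, x, hx, add_comm y x⟩
        · exact .inl (.inr (L.add_mem hx hy))
        · exact .inr ⟨y₁, hy₁, x + y₂, L.add_mem hx hy₂, add_left_comm y₁ x y₂⟩
        · exact .inr ⟨x₁ + y, K.add_mem hx₁ hy, x₂, hx₂, add_right_comm x₁ y x₂⟩
        · exact .inr ⟨x₁, hx₁, x₂ + y, L.add_mem hx₂ hy, (add_assoc x₁ x₂ y).symm⟩
        · exact .inr ⟨x₁ + y₁, K.add_mem hx₁ hy₁, x₂ + y₂, L.add_mem hx₂ hy₂,
            add_add_add_comm x₁ y₁ x₂ y₂⟩ }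
  refine Subset.antisymm (show K ⊔ L ≤ U from sup_le ?_ ?_) (union_subset (union_subset ?_ ?_) ?_)
  · exact fun x hx => .inl (.inl hx)
  · exact fun x hx => .inl (.inr hx)
  · exact (le_sup_left : K ≤ K ⊔ L)
  · exact (le_sup_right : L ≤ K ⊔ L)
  · rintro _ ⟨x, hx, y, hy, rfl⟩
    exact (K ⊔ L).add_mem ((le_sup_left : K ≤ K ⊔ L) hx) ((le_sup_right : L ≤ K ⊔ L) hy)

theorem convexCone_coe_sSup_of_directedOn [SMul R E] {S : Set (ConvexCone R E)}
    (hS : DirectedOn (· ≤ ·) S) : (↑(sSup S) : Set E) = ⋃ K ∈ S, (K : Set E) := by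
  let U : ConvexCone R E :=
    { carrier := ⋃ K ∈ S, (K : Set E)
      smul_mem' := by
        intro c hc x hx
        obtain ⟨K, hK, hxK⟩ := mem_iUnion₂.mp hx
        exact mem_biUnion hK (K.smul_mem hc hxK)
      add_mem' := by
        intro x hx y hy
        obtain ⟨K, hK, hxK⟩ := mem_iUnion₂.mp hx
        obtain ⟨L, hL, hyL⟩ := mem_iUnion₂.mp hy
        obtain ⟨M, hM, hKM, hLM⟩ := hS K hK L hL
        exact mem_biUnion hM (M.add_mem (hKM hxK) (hLM hyL)) }
  refine Subset.antisymm (show sSup S ≤ U from sSup_le fun K hK => ?_) (iUnion₂_subset ?_)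
  · exact fun x hx => mem_biUnion hK hx
  · exact fun K hK => (le_sSup hK : K ≤ sSup S)

end SupremaOfCones

section BluntCones

variable {R E : Type*} [Semiring R] [PartialOrder R] [AddCommMonoid E] [Module R E]

/-- `K` is a blunt convex cone contained in the submodule `W`: the linear-algebraic form of
coherence, where `W` plays the role of the space of gambles. -/
structure IsBluntConeIn (W : Submodule R E) (K : ConvexCone R E) : Prop where
  blunt : K.Blunt
  le : K ≤ W.toConvexCone

/-- The analogue of `Atoms` for cones: the maximal blunt cones in `W` that contain `K`. -/
def bluntAtoms (W : Submodule R E) (K : ConvexCone R E) : Set (ConvexCone R E) :=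
  {M | Maximal (IsBluntConeIn W) M ∧ K ≤ M}

theorem IsBluntConeIn.sSup_of_isChain {W : Submodule R E} {S : Set (ConvexCone R E)}
    (hS : ∀ K ∈ S, IsBluntConeIn W K) (hchain : IsChain (· ≤ ·) S) :
    IsBluntConeIn W (sSup S) := by
  refine ⟨fun h0 => ?_, sSup_le fun K hK => (hS K hK).le⟩
  rw [← SetLike.mem_coe, convexCone_coe_sSup_of_directedOn hchain.directedOn] at h0
  obtain ⟨K, hK, h0K⟩ := mem_iUnion₂.mp h0
  exact (hS K hK).blunt h0K

theorem IsBluntConeIn.bluntAtoms_nonempty {W : Submodule R E} {K : ConvexCone R E}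
    (hK : IsBluntConeIn W K) : (bluntAtoms W K).Nonempty := by
  obtain ⟨M, hKM, hM⟩ := zorn_le_nonempty₀ {C | IsBluntConeIn W C}
    (fun S hS hchain _ _ => ⟨sSup S, sSup_of_isChain hS hchain, fun _ => le_sSup⟩) K hK
  exact ⟨M, hM, hKM⟩

end BluntCones

section Separation

variable {𝕜 E : Type*} [Field 𝕜] [LinearOrder 𝕜] [IsStrictOrderedRing 𝕜]
  [AddCommGroup E] [Module 𝕜 E]

theorem mem_convexCone_hull_singleton {x y : E} :
    y ∈ ConvexCone.hull 𝕜 {x} ↔ ∃ c : 𝕜, 0 < c ∧ y = c • x := by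
  simp only [ConvexCone.mem_hull_of_convex (convex_singleton x), smul_set_singleton,
    mem_singleton_iff]

theorem blunt_sup_hull_neg_singleton {K : ConvexCone 𝕜 E} {x : E} (hK : K.Blunt) (hx0 : x ≠ 0)
    (hxK : x ∉ K) : (K ⊔ ConvexCone.hull 𝕜 {-x}).Blunt := by
  intro h0
  rw [← SetLike.mem_coe, convexCone_coe_sup] at h0
  obtain (h0K | h0ray) | ⟨y, hyK, z, hz, hyz⟩ := h0
  · exact hK h0K
  · obtain ⟨c, hc, h⟩ := mem_convexCone_hull_singleton.mp h0ray
    exact smul_ne_zero hc.ne' (neg_ne_zero.mpr hx0) h.symm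
  · obtain ⟨c, hc, rfl⟩ := mem_convexCone_hull_singleton.mp hz
    have hy : y = c • x := by simpa only [smul_neg, add_neg_eq_zero] using hyz
    exact hxK ((K.smul_mem_iff hc).mp (hy ▸ hyK))

theorem IsBluntConeIn.exists_bluntAtoms_notMem {W : Submodule 𝕜 E} {K : ConvexCone 𝕜 E} {x : E}
    (hK : IsBluntConeIn W K) (hxW : x ∈ W) (hx0 : x ≠ 0) (hxK : x ∉ K) :
    ∃ M ∈ bluntAtoms W K, x ∉ M := by
  have hsup : IsBluntConeIn W (K ⊔ ConvexCone.hull 𝕜 {-x}) :=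
    ⟨blunt_sup_hull_neg_singleton hK.blunt hx0 hxK,
      sup_le hK.le (ConvexCone.hull_min (singleton_subset_iff.mpr (W.neg_mem hxW)))⟩
  obtain ⟨M, hM, hsupM⟩ := hsup.bluntAtoms_nonempty
  have hnegM : -x ∈ M := (le_sup_right.trans hsupM) (ConvexCone.subset_hull (mem_singleton (-x)))
  exact ⟨M, ⟨hM, le_sup_left.trans hsupM⟩, fun hxM => hM.prop.blunt.salient x hxM hx0 hnegM⟩

theorem stmt17_general {W : Submodule 𝕜 E} {K : ConvexCone 𝕜 E} (hK : IsBluntConeIn W K) :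
    (bluntAtoms W K).Nonempty ∧ K = sInf (bluntAtoms W K) := by
  obtain ⟨M, hM⟩ := hK.bluntAtoms_nonempty
  refine ⟨⟨M, hM⟩, le_antisymm (le_sInf fun _ hN => hN.2) fun x hx => ?_⟩
  rw [ConvexCone.mem_sInf] at hx
  have hx0 : x ≠ 0 := ne_of_mem_of_not_mem (hx M hM) hM.1.prop.blunt
  by_contra hxK
  obtain ⟨N, hN, hxN⟩ := hK.exists_bluntAtoms_notMem (hM.1.prop.le (hx M hM)) hx0 hxK
  exact hxN (hx N hN)

end Separation

section CoherentSets

variable {Ω : Type u}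

/-- The gambles on `Ω` as a linear subspace of the space of all real functions on `Ω`. -/
def gambleSubmodule (Ω : Type u) : Submodule ℝ (Ω → ℝ) where
  carrier := Gmb Ω
  zero_mem' := ⟨0, fun _ => abs_zero.le⟩
  add_mem' := by
    rintro f g ⟨A, hA⟩ ⟨B, hB⟩
    exact ⟨A + B, fun ω => (abs_add_le _ _).trans (add_le_add (hA ω) (hB ω))⟩
  smul_mem' := by
    rintro c f ⟨A, hA⟩
    exact ⟨|c| * A, fun ω => (abs_mul c (f ω)).trans_le
      (mul_le_mul_of_nonneg_left (hA ω) (abs_nonneg c))⟩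

theorem coherent_coe_iff {K : ConvexCone ℝ (Ω → ℝ)} :
    Coherent (K : Set (Ω → ℝ)) ↔ IsBluntConeIn (gambleSubmodule Ω) K ∧ GmbPos Ω ⊆ K :=
  ⟨fun ⟨hGmb, hPos, h0, _, _⟩ => ⟨⟨h0, hGmb⟩, hPos⟩,
    fun ⟨⟨h0, hGmb⟩, hPos⟩ =>
      ⟨hGmb, hPos, h0, fun _ hf _ hg => K.add_mem hf hg, fun _ hf _ hc => K.smul_mem hc hf⟩⟩

theorem Coherent.exists_convexCone_coe_eq {D : Set (Ω → ℝ)} (hD : Coherent D) :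
    ∃ K : ConvexCone ℝ (Ω → ℝ), (K : Set (Ω → ℝ)) = D :=
  have ⟨_, _, _, hadd, hsmul⟩ := hD
  ⟨⟨D, fun c hc f hf => hsmul f hf c hc, fun f hf g hg => hadd f hf g hg⟩, rfl⟩

theorem maxCoh_coe_iff {K : ConvexCone ℝ (Ω → ℝ)} (hPos : GmbPos Ω ⊆ K) :
    MaxCoh (K : Set (Ω → ℝ)) ↔ Maximal (IsBluntConeIn (gambleSubmodule Ω)) K := by
  constructor
  · rintro ⟨hK, hmax⟩
    refine ⟨(coherent_coe_iff.mp hK).1, fun L hL hKL => ?_⟩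
    exact (hmax L (coherent_coe_iff.mpr ⟨hL, hPos.trans hKL⟩) hKL).subset
  · intro hK
    refine ⟨coherent_coe_iff.mpr ⟨hK.prop, hPos⟩, fun D hD hKD => ?_⟩
    obtain ⟨L, rfl⟩ := hD.exists_convexCone_coe_eq
    have hLK : L ≤ K := hK.le_of_ge (coherent_coe_iff.mp hD).1 hKD
    exact Subset.antisymm hLK hKD

theorem atoms_coe {K : ConvexCone ℝ (Ω → ℝ)} (hPos : GmbPos Ω ⊆ K) :
    Atoms (K : Set (Ω → ℝ)) = (↑) '' bluntAtoms (gambleSubmodule Ω) K := by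
  ext D
  constructor
  · rintro ⟨hD, hKD⟩
    obtain ⟨M, rfl⟩ := hD.1.exists_convexCone_coe_eq
    exact ⟨M, ⟨(maxCoh_coe_iff (hPos.trans hKD)).mp hD, hKD⟩, rfl⟩
  · rintro ⟨M, ⟨hM, hKM⟩, rfl⟩
    exact ⟨(maxCoh_coe_iff (hPos.trans hKM)).mpr hM, hKM⟩

end CoherentSets

theorem stmt17 {Ω : Type u} [Nonempty Ω] (D : Set (Ω → ℝ)) (hD : Coherent D) :
    (Atoms D).Nonempty ∧ D = ⋂₀ (Atoms D) := by
  obtain ⟨K, rfl⟩ := hD.exists_convexCone_coe_eq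
  obtain ⟨hK, hPos⟩ := coherent_coe_iff.mp hD
  simpa only [atoms_coe hPos, image_nonempty, sInter_image, ← ConvexCone.coe_sInf,
    SetLike.coe_set_eq] using stmt17_general hK
end
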